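/- Let E be a row-finite directed graph. Then the following are equivalent: (1) for every x ∈ E^∞ there exists n ∈ ℕ such that every path in x(n)E^∞ that is frequently divertable to [x] is shift equivalent to x; (2) for every x ∈ E^∞ there exists n ∈ ℕ such that the only path in x(n)E^∞ that is shift equivalent to x is σ^n(x). -/

import Mathlib

/-- A directed graph: countable sets of vertices and edges, with range and source
maps. -/
structure DGraph : Type 1 where
  V : Type
  E : Type
  countableV : Countable V
  countableE : Countable E
  r : E → V
  s : E → V

namespace DGraph

/-- `E` is row-finite: every vertex receives only finitely many edges. -/
def RowFinite (G : DGraph) : Prop := ∀ v : G.V, {e : G.E | G.r e = v}.Finite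

/-- A source of `E`: a vertex receiving no edges. -/
def IsSource (G : DGraph) (v : G.V) : Prop := ∀ e : G.E, G.r e ≠ v

end DGraph

/-- A (finite or infinite) path in the directed graph `G`.  `edge i` is the
`(i+1)`-st edge of the path (or `none` beyond the end of the path); once `none`
always `none`, so a path is either a vertex (`rng`, with no edges), a finite path,
or an infinite path.  Edges are composed so that `s(edge i) = r(edge (i+1))`. -/
structure LPath (G : DGraph) where
  rng : G.V
  edge : ℕ → Option G.E
  edge_closed : ∀ i, edge i = none → edge (i + 1) = none
  rng_compat : ∀ e, edge 0 = some e → G.r e = rng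
  compat : ∀ i e f, edge i = some e → edge (i + 1) = some f → G.s e = G.r f

namespace LPath

variable {G : DGraph}

/-- The vertex `x(n)` of the path `x` (a junk value, the range, beyond the length
of the path). -/
def vert (x : LPath G) : ℕ → G.V
  | 0 => x.rng
  | n + 1 =>
    match x.edge n with
    | some e => G.s e
    | none => x.rng

/-- `x` is an infinite path, i.e. a member of `E^∞`. -/
def Infinite (x : LPath G) : Prop := ∀ i, (x.edge i).isSome

/-- `n ≤ |x|`: the first `n` edges of `x` all exist. -/
def LeLen (x : LPath G) (n : ℕ) : Prop := ∀ i, i < n → (x.edge i).isSome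

/-- `|x| = n`: `x` is a finite path of length `n`. -/
def LenEq (x : LPath G) (n : ℕ) : Prop := x.edge n = none ∧ x.LeLen n

theorem vert_eq (x : LPath G) (m : ℕ) (e : G.E) (h : x.edge m = some e) :
    G.r e = x.vert m := by
  cases m with
  | zero => exact x.rng_compat e h
  | succ n =>
    cases hn : x.edge n with
    | none => exact absurd h (by simp [x.edge_closed n hn])
    | some f =>
      have hc := x.compat n f e hn h
      simp only [vert, hn]
      exact hc.symm

/-- The shifted path `σ^m(x)` (meaningful when `m ≤ |x|`). -/
def shift (x : LPath G) (m : ℕ) : LPath G where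
  rng := x.vert m
  edge i := x.edge (m + i)
  edge_closed i h := x.edge_closed (m + i) h
  rng_compat e he := x.vert_eq m e he
  compat i e f he hf := x.compat (m + i) e f he hf

/-- `x` is shift equivalent to `y` with lag `n ∈ ℤ`: there are `p, q ∈ ℕ` with
`p - q = n`, `p ≤ |x|`, `q ≤ |y|` and `σ^p(x) = σ^q(y)`. -/
def ShiftEquivLag (x y : LPath G) (n : ℤ) : Prop :=
  ∃ p q : ℕ, (p : ℤ) - (q : ℤ) = n ∧ x.LeLen p ∧ y.LeLen q ∧ x.shift p = y.shift q

/-- `x` is shift equivalent to `y`. -/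
def ShiftEquiv (x y : LPath G) : Prop := ∃ n : ℤ, ShiftEquivLag x y n

/-- `x` belongs to `E^{≤∞}`: it is infinite, or finite with its source a source
of the graph. -/
def Boundary (x : LPath G) : Prop :=
  x.Infinite ∨ ∃ n : ℕ, x.LenEq n ∧ G.IsSource (x.vert n)

/-- `x` is frequently divertable to `[y]`: for every `n ≤ |x|` there is a path in
`x(n)E^{≤∞}` that is shift equivalent to `y`. -/
def FreqDiv (x y : LPath G) : Prop :=
  ∀ n : ℕ, x.LeLen n → ∃ z : LPath G, z.Boundary ∧ z.rng = x.vert n ∧ ShiftEquiv z y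

/-- The segment `x(m, n)` of `x` is a cycle: it is closed (`x(m) = x(n)`) and the
sources `x(i)`, `m < i ≤ n`, of its edges are pairwise distinct. -/
def HasCycleAt (x : LPath G) (m n : ℕ) : Prop :=
  m < n ∧ x.LeLen n ∧ x.vert m = x.vert n ∧
    ∀ i j, m < i → i ≤ n → m < j → j ≤ n → x.vert i = x.vert j → i = j

/-- `x` contains a cycle. -/
def ContainsCycle (x : LPath G) : Prop := ∃ m n, x.HasCycleAt m n

end LPath

/-- A cycle in `G`: a finite path `α = α_1 ⋯ α_len` (here 0-indexed, and with junk
values of `edge` beyond `len`) of non-zero length with `r(α) = s(α)` and whose edges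
have pairwise distinct sources. -/
structure DCycle (G : DGraph) where
  len : ℕ
  len_pos : 0 < len
  edge : ℕ → G.E
  compat : ∀ i, i + 1 < len → G.s (edge i) = G.r (edge (i + 1))
  closed : G.s (edge (len - 1)) = G.r (edge 0)
  distinct : ∀ i j, i < len → j < len → G.s (edge i) = G.s (edge j) → i = j

namespace DCycle

variable {G : DGraph}

/-- `f` is an entry to the cycle `c`: `r(f) = r(c_i)` and `f ≠ c_i` for some `i`. -/
def IsEntry (c : DCycle G) (f : G.E) : Prop :=
  ∃ i, i < c.len ∧ G.r f = G.r (c.edge i) ∧ f ≠ c.edge i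

/-- The edge `f` lies in the cycle `c`. -/
def EdgeMem (c : DCycle G) (f : G.E) : Prop := ∃ i, i < c.len ∧ c.edge i = f

end DCycle

/-! Give the path space the topology of coordinatewise convergence; it is completely metrizable.
For infinite paths, `FreqDiv y x` says that `y` lies in the closure of `[x]`, so condition (1) asks
that `[x] ∩ x(n)E^∞` be closed for some `n`, and condition (2) that it be a singleton. Singletons
are closed. Conversely, `[x]` is countable, so by Baire's theorem a closed `[x] ∩ x(n)E^∞` has an
isolated point `w`. Arbitrarily late tails of `w` are tails `σ^m(x)` of `x`, and replacing a late
enough one by a member of `[x] ∩ x(m)E^∞` must give back `w`, so that member is `σ^m(x)`. -/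

open Set Topology TopologicalSpace

theorem exists_isOpen_singleton_of_countable (X : Type*) [TopologicalSpace X] [T1Space X]
    [BaireSpace X] [Countable X] [Nonempty X] : ∃ x : X, IsOpen {x} := by
  obtain ⟨x, hx⟩ := nonempty_interior_of_iUnion_of_closed (fun x : X => isClosed_singleton)
    (iUnion_of_singleton X)
  exact ⟨x, interior_eq_iff_isOpen.1 (hx.subset_singleton_iff.1 interior_subset)⟩

theorem exists_mem_nhds_inter_subset_singleton_of_countable {X : Type*} [TopologicalSpace X]
    [IsCompletelyMetrizableSpace X] {C : Set X} (hclosed : IsClosed C) (hcount : C.Countable)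
    (hne : C.Nonempty) : ∃ x ∈ C, ∃ U ∈ 𝓝 x, U ∩ C ⊆ {x} := by
  have : IsCompletelyMetrizableSpace C :=
    hclosed.isClosedEmbedding_subtypeVal.IsCompletelyMetrizableSpace
  have := hcount.to_subtype
  have := hne.to_subtype
  obtain ⟨x, hx⟩ := exists_isOpen_singleton_of_countable C
  obtain ⟨U, hU, hUx⟩ := isOpen_induced_iff.1 hx
  have hxU : x ∈ Subtype.val ⁻¹' U := hUx ▸ mem_singleton x
  exact ⟨x, x.2, U, hU.mem_nhds hxU, fun y ⟨hyU, hyC⟩ =>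
    congrArg Subtype.val (hUx.subset (show (⟨y, hyC⟩ : C) ∈ Subtype.val ⁻¹' U from hyU))⟩

namespace LPath

variable {G : DGraph} {x y z : LPath G} {m n : ℕ}

attribute [ext] LPath

section Shift

theorem vert_of_edge_eq_some {e : G.E} (h : x.edge n = some e) : x.vert (n + 1) = G.s e := by
  simp only [vert, h]

theorem Infinite.leLen (hx : x.Infinite) (n : ℕ) : x.LeLen n := fun i _ => hx i

theorem vert_shift (h : x.LeLen (m + n)) : (x.shift m).vert n = x.vert (m + n) := by
  cases n with
  | zero => rfl
  | succ k =>
    obtain ⟨e, he⟩ := Option.isSome_iff_exists.1 (h (m + k) (by omega))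
    rw [vert_of_edge_eq_some (x := x.shift m) he, ← Nat.add_assoc, vert_of_edge_eq_some he]

theorem shift_shift (h : x.LeLen (m + n)) : (x.shift m).shift n = x.shift (m + n) :=
  LPath.ext (vert_shift h) (funext fun i => congrArg x.edge (Nat.add_assoc m n i).symm)

theorem edge_eq_shift_edge_sub (x : LPath G) {i : ℕ} (h : n ≤ i) :
    x.edge i = (x.shift n).edge (i - n) :=
  congrArg x.edge (Nat.add_sub_cancel' h).symm

theorem infinite_shift_iff (h : x.LeLen n) : (x.shift n).Infinite ↔ x.Infinite := by
  refine ⟨fun hs i => ?_, fun hx i => hx (n + i)⟩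
  rcases lt_or_ge i n with hi | hi
  · exact h i hi
  · exact edge_eq_shift_edge_sub x hi ▸ hs (i - n)

end Shift

section Cylinder

/-- The cylinder set of the paths whose range and first `n` edges are those of `x`. For `n > |x|`
it is `{x}`, since the end of the path is compared too. -/
def cylinder (x : LPath G) (n : ℕ) : Set (LPath G) :=
  {y | y.rng = x.rng ∧ ∀ i < n, y.edge i = x.edge i}

theorem cylinder_anti (x : LPath G) (h : m ≤ n) : x.cylinder n ⊆ x.cylinder m :=
  fun _ hy => ⟨hy.1, fun i hi => hy.2 i (hi.trans_le h)⟩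

theorem vert_eq_of_mem_cylinder (h : y ∈ x.cylinder n) : y.vert n = x.vert n := by
  cases n with
  | zero => exact h.1
  | succ k => simp only [vert, h.2 k k.lt_succ_self, h.1]

theorem LeLen.of_mem_cylinder (hx : x.LeLen n) (h : y ∈ x.cylinder n) : y.LeLen n :=
  fun i hi => h.2 i hi ▸ hx i hi

theorem eq_of_mem_cylinder_of_shift_eq (h : y ∈ x.cylinder n) (hs : y.shift n = x.shift n) :
    y = x := by
  refine LPath.ext h.1 (funext fun i => ?_)
  rcases lt_or_ge i n with hi | hi
  · exact h.2 i hi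
  · rw [edge_eq_shift_edge_sub y hi, edge_eq_shift_edge_sub x hi, hs]

end Cylinder

section Splice

/-- The path that follows `x` for its first `n` edges and then continues along `y`; it serves to
replace a tail of `x`. -/
def splice (x : LPath G) (n : ℕ) (y : LPath G) (hx : x.LeLen n) (hy : y.rng = x.vert n) :
    LPath G where
  rng := x.rng
  edge i := if i < n then x.edge i else y.edge (i - n)
  edge_closed i hi := by
    have hni : n ≤ i := by
      by_contra! hlt
      rw [if_pos hlt] at hi
      exact absurd (hx i hlt) (by simp [hi])
    rw [if_neg hni.not_gt] at hi
    rw [if_neg (by omega), Nat.sub_add_comm hni]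
    exact y.edge_closed _ hi
  rng_compat e he := by
    rcases n.eq_zero_or_pos with rfl | hn
    · exact (y.rng_compat e he).trans hy
    · rw [if_pos hn] at he
      exact x.rng_compat e he
  compat i e f he hf := by
    rcases lt_trichotomy (i + 1) n with h | rfl | h
    · rw [if_pos (by omega)] at he
      rw [if_pos h] at hf
      exact x.compat i e f he hf
    · rw [if_pos i.lt_succ_self] at he
      rw [if_neg (lt_irrefl _), Nat.sub_self] at hf
      rw [y.rng_compat f hf, hy, vert_of_edge_eq_some he]
    · rw [if_neg (by omega)] at he
      rw [if_neg (by omega), Nat.sub_add_comm (Nat.le_of_lt_succ h)] at hf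
      exact y.compat _ e f he hf

variable (hx : x.LeLen n) (hy : y.rng = x.vert n)

theorem splice_mem_cylinder : x.splice n y hx hy ∈ x.cylinder n :=
  ⟨rfl, fun _ hi => if_pos hi⟩

theorem shift_splice : (x.splice n y hx hy).shift n = y := by
  refine LPath.ext ((vert_eq_of_mem_cylinder (splice_mem_cylinder hx hy)).trans hy.symm)
    (funext fun i => ?_)
  exact (if_neg (by omega)).trans (congrArg y.edge (Nat.add_sub_cancel_left n i))

end Splice

section ShiftClass

/-- The shift equivalence class `[x]`. The paper restricts it to `E^{≤∞}`, which changes nothing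
when `x` is infinite, since then all its members are infinite. -/
def shiftClass (x : LPath G) : Set (LPath G) := {y | ShiftEquiv y x}

theorem mem_shiftClass_iff (hx : x.Infinite) :
    y ∈ x.shiftClass ↔ y.Infinite ∧ ∃ p q, y.shift p = x.shift q := by
  constructor
  · rintro ⟨_, p, q, _, hp, hq, h⟩
    exact ⟨(infinite_shift_iff hp).1 (h ▸ (infinite_shift_iff hq).2 hx), p, q, h⟩
  · rintro ⟨hy, p, q, h⟩
    exact ⟨_, p, q, rfl, hy.leLen p, hx.leLen q, h⟩

theorem shift_mem_shiftClass_iff (hx : x.Infinite) (hy : y.LeLen n) :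
    y.shift n ∈ x.shiftClass ↔ y ∈ x.shiftClass := by
  rw [mem_shiftClass_iff hx, mem_shiftClass_iff hx, infinite_shift_iff hy]
  refine and_congr_right fun hyinf => ⟨?_, ?_⟩ <;> rintro ⟨p, q, h⟩
  · exact ⟨n + p, q, by rw [← shift_shift (hyinf.leLen _), h]⟩
  · refine ⟨p, q + n, ?_⟩
    rw [shift_shift (hyinf.leLen _), Nat.add_comm, ← shift_shift (hyinf.leLen _), h,
      shift_shift (hx.leLen _)]

theorem shift_mem_shiftClass (hx : x.Infinite) (n : ℕ) : x.shift n ∈ x.shiftClass :=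
  (shift_mem_shiftClass_iff hx (hx.leLen n)).2 ((mem_shiftClass_iff hx).2 ⟨hx, 0, 0, rfl⟩)

theorem splice_mem_shiftClass (hx : x.Infinite) (hz : z ∈ x.shiftClass) (hy : y.LeLen n)
    (h : z.rng = y.vert n) : y.splice n z hy h ∈ x.shiftClass :=
  (shift_mem_shiftClass_iff hx (hy.of_mem_cylinder (splice_mem_cylinder hy h))).1
    ((shift_splice hy h).symm ▸ hz)

theorem countable_setOf_shift_eq (n : ℕ) (z : LPath G) :
    {y : LPath G | y.shift n = z}.Countable := by
  have := G.countableV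
  have := G.countableE
  refine countable_of_injective_of_countable_image
    (f := fun y : LPath G => (y.rng, fun i : Fin n => y.edge i)) ?_ (to_countable _)
  intro a ha b hb hab
  obtain ⟨hrng, hedge⟩ := Prod.mk.inj hab
  exact eq_of_mem_cylinder_of_shift_eq ⟨hrng, fun i hi => congrFun hedge ⟨i, hi⟩⟩
    (Eq.trans ha (Eq.symm hb))

theorem countable_shiftClass (x : LPath G) : x.shiftClass.Countable := by
  refine (countable_iUnion fun p => countable_iUnion fun q =>
    countable_setOf_shift_eq p (x.shift q)).mono ?_
  rintro y ⟨_, p, q, _, _, _, h⟩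
  exact mem_iUnion₂.2 ⟨p, q, h⟩

end ShiftClass

section Topology

instance : TopologicalSpace G.V := ⊥
instance : DiscreteTopology G.V := ⟨rfl⟩
instance : TopologicalSpace (Option G.E) := ⊥
instance : DiscreteTopology (Option G.E) := ⟨rfl⟩

/-- The coordinates of a path, through which the path space is topologized. -/
def coords (x : LPath G) : G.V × (ℕ → Option G.E) := (x.rng, x.edge)

/-- The topology of coordinatewise convergence. On infinite paths it is the usual topology of the
path space; a finite path is isolated, being the only path with its edges and no further one. -/
instance : TopologicalSpace (LPath G) := .induced coords inferInstance

theorem coords_injective : Function.Injective (coords : LPath G → _) := fun _ _ h =>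
  LPath.ext (Prod.mk.inj h).1 (Prod.mk.inj h).2

theorem range_coords : range (coords : LPath G → _) =
    {c | (∀ i, c.2 i = none → c.2 (i + 1) = none) ∧ (∀ e, c.2 0 = some e → G.r e = c.1) ∧
      ∀ i e f, c.2 i = some e → c.2 (i + 1) = some f → G.s e = G.r f} := by
  ext c
  refine ⟨?_, fun ⟨hclosed, hrng, hcompat⟩ => ⟨⟨c.1, c.2, hclosed, hrng, hcompat⟩, rfl⟩⟩
  rintro ⟨x, rfl⟩
  exact ⟨x.edge_closed, x.rng_compat, x.compat⟩

theorem isClosed_range_coords : IsClosed (range (coords : LPath G → _)) := by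
  have hrng : Continuous fun c : G.V × (ℕ → Option G.E) => c.1 := continuous_fst
  have hedge (i : ℕ) : Continuous fun c : G.V × (ℕ → Option G.E) => c.2 i := by fun_prop
  have hclopen {Y : Type} [TopologicalSpace Y] [DiscreteTopology Y]
      {f : G.V × (ℕ → Option G.E) → Y} (hf : Continuous f) (p : Y → Prop) :
      IsClosed {c | p (f c)} := (isClosed_discrete {y | p y}).preimage hf
  simp only [range_coords, ofPred_and, ofPred_forall]
  refine (isClosed_iInter fun i => ?_).inter
    ((isClosed_iInter fun e => ?_).inter (isClosed_iInter fun i => ?_))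
  · exact hclopen ((hedge i).prodMk (hedge (i + 1))) fun a => a.1 = none → a.2 = none
  · exact hclopen ((hedge 0).prodMk hrng) fun a => a.1 = some e → G.r e = a.2
  · refine isClosed_iInter fun e => isClosed_iInter fun f => ?_
    exact hclopen ((hedge i).prodMk (hedge (i + 1))) fun a =>
      a.1 = some e → a.2 = some f → G.s e = G.r f

theorem isClosedEmbedding_coords : IsClosedEmbedding (coords : LPath G → _) :=
  ⟨⟨⟨rfl⟩, coords_injective⟩, isClosed_range_coords⟩

instance : IsCompletelyMetrizableSpace (LPath G) :=
  isClosedEmbedding_coords.IsCompletelyMetrizableSpace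

theorem continuous_rng : Continuous (rng : LPath G → G.V) :=
  continuous_fst.comp isClosedEmbedding_coords.continuous

theorem continuous_edge (i : ℕ) : Continuous fun x : LPath G => x.edge i :=
  (continuous_apply i).comp (continuous_snd.comp isClosedEmbedding_coords.continuous)

theorem isClopen_setOf_rng_eq (v : G.V) : IsClopen {x : LPath G | x.rng = v} :=
  (isClopen_discrete {v}).preimage continuous_rng

theorem isClosed_setOf_infinite : IsClosed {x : LPath G | x.Infinite} := by
  simp only [Infinite, ofPred_forall]
  exact isClosed_iInter fun i =>
    (isClosed_discrete {e : Option G.E | e.isSome}).preimage (continuous_edge i)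

theorem isOpen_cylinder (x : LPath G) (n : ℕ) : IsOpen (x.cylinder n) :=
  ((isOpen_discrete {x.rng}).prod (PiNat.isOpen_cylinder _ x.edge n)).preimage
    isClosedEmbedding_coords.continuous

theorem nhds_hasBasis_cylinder (x : LPath G) : (𝓝 x).HasBasis (fun _ => True) x.cylinder := by
  refine ⟨fun U => ⟨fun hU => ?_, fun ⟨n, _, hn⟩ =>
    Filter.mem_of_superset ((x.isOpen_cylinder n).mem_nhds ⟨rfl, fun _ _ => rfl⟩) hn⟩⟩
  rw [isClosedEmbedding_coords.nhds_eq_comap, coords, nhds_prod_eq, nhds_discrete] at hU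
  obtain ⟨W, hW, hWU⟩ := hU
  obtain ⟨A, hA, B, hB, hAB⟩ := Filter.mem_prod_iff.1 hW
  obtain ⟨_, ⟨c, n, rfl⟩, hxc, hcB⟩ :=
    (PiNat.isTopologicalBasis_cylinders fun _ => Option G.E).mem_nhds_iff.1 hB
  rw [← PiNat.mem_cylinder_iff_eq.1 hxc] at hcB
  exact ⟨n, trivial, fun y hy => hWU (hAB ⟨(hy.1 ▸ hA : y.rng ∈ A), hcB hy.2⟩)⟩

end Topology

section Closure

theorem freqDiv_iff_mem_closure (hx : x.Infinite) (hy : y.Infinite) :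
    FreqDiv y x ↔ y ∈ closure x.shiftClass := by
  rw [mem_closure_iff_nhds_basis y.nhds_hasBasis_cylinder]
  constructor
  · intro h n _
    obtain ⟨z, _, hzy, hzx⟩ := h n (hy.leLen n)
    exact ⟨_, splice_mem_shiftClass hx hzx (hy.leLen n) hzy, splice_mem_cylinder _ _⟩
  · intro h n hn
    obtain ⟨w, hwx, hwy⟩ := h n trivial
    have hw : w.LeLen n := hn.of_mem_cylinder hwy
    have hmem : w.shift n ∈ x.shiftClass := (shift_mem_shiftClass_iff hx hw).2 hwx
    exact ⟨w.shift n, .inl ((mem_shiftClass_iff hx).1 hmem).1, vert_eq_of_mem_cylinder hwy, hmem⟩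

theorem forall_freqDiv_imp_shiftEquiv_iff_isClosed (hx : x.Infinite) (v : G.V) :
    (∀ y : LPath G, y.Infinite → y.rng = v → FreqDiv y x → ShiftEquiv y x) ↔
      IsClosed (x.shiftClass ∩ {y | y.rng = v}) := by
  have hinf : closure x.shiftClass ⊆ {y | y.Infinite} :=
    closure_minimal (fun y hy => ((mem_shiftClass_iff hx).1 hy).1) isClosed_setOf_infinite
  have hv : IsClopen {y : LPath G | y.rng = v} := isClopen_setOf_rng_eq v
  have hclosure :
      closure (x.shiftClass ∩ {y | y.rng = v}) = closure x.shiftClass ∩ {y | y.rng = v} :=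
    ((closure_inter_subset_inter_closure _ _).trans_eq (by rw [hv.isClosed.closure_eq])).antisymm
      hv.isOpen.closure_inter
  rw [← closure_subset_iff_isClosed, hclosure]
  exact ⟨fun h y hy =>
      ⟨h y (hinf hy.1) hy.2 ((freqDiv_iff_mem_closure hx (hinf hy.1)).2 hy.1), hy.2⟩,
    fun h y hy hr hdiv => (h ⟨(freqDiv_iff_mem_closure hx hy).1 hdiv, hr⟩).1⟩

theorem forall_shiftEquiv_imp_eq_shift_iff (hx : x.Infinite) (n : ℕ) :
    (∀ y : LPath G, y.Infinite → y.rng = x.vert n → ShiftEquiv y x → y = x.shift n) ↔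
      x.shiftClass ∩ {y | y.rng = x.vert n} = {x.shift n} := by
  rw [eq_singleton_iff_unique_mem, and_iff_right ⟨shift_mem_shiftClass hx n, rfl⟩]
  exact ⟨fun h y hy => h y ((mem_shiftClass_iff hx).1 hy.1).1 hy.2 hy.1,
    fun h y _ hr hyx => h y ⟨hyx, hr⟩⟩

theorem exists_inter_cylinder_subset_singleton {v : G.V}
    (hclosed : IsClosed (x.shiftClass ∩ {y | y.rng = v}))
    (hne : (x.shiftClass ∩ {y | y.rng = v}).Nonempty) :
    ∃ w ∈ x.shiftClass, ∃ k, x.shiftClass ∩ w.cylinder k ⊆ {w} := by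
  obtain ⟨w, ⟨hwx, hwr⟩, U, hU, hUw⟩ := exists_mem_nhds_inter_subset_singleton_of_countable
    hclosed (x.countable_shiftClass.mono inter_subset_left) hne
  obtain ⟨k, _, hk⟩ := w.nhds_hasBasis_cylinder.mem_iff.1 hU
  exact ⟨w, hwx, k, fun y hy => hUw ⟨hk hy.2, hy.1, hy.2.1.trans hwr⟩⟩

theorem exists_inter_eq_singleton_of_isolated (hx : x.Infinite) (hy : y ∈ x.shiftClass)
    (h : x.shiftClass ∩ y.cylinder n ⊆ {y}) :
    ∃ m, x.shiftClass ∩ {z | z.rng = x.vert m} = {x.shift m} := by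
  obtain ⟨hyinf, p, q, hpq⟩ := (mem_shiftClass_iff hx).1 hy
  have htail : y.shift (p + n) = x.shift (q + n) := by
    rw [← shift_shift (hyinf.leLen _), hpq, shift_shift (hx.leLen _)]
  refine ⟨q + n, eq_singleton_iff_unique_mem.2 ⟨⟨shift_mem_shiftClass hx _, rfl⟩, ?_⟩⟩
  rintro z ⟨hz, hzr⟩
  have hr : z.rng = y.vert (p + n) := hzr.trans (congrArg rng htail).symm
  have hsplice : y.splice (p + n) z (hyinf.leLen _) hr = y :=
    h ⟨splice_mem_shiftClass hx hz _ hr,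
      cylinder_anti y (Nat.le_add_left n p) (splice_mem_cylinder _ hr)⟩
  rw [← htail, ← hsplice, shift_splice]

end Closure

end LPath

open LPath in
theorem stmt14_general {G : DGraph} {x : LPath G} (hx : x.Infinite) :
    (∃ n : ℕ, ∀ y : LPath G, y.Infinite → y.rng = x.vert n → FreqDiv y x → ShiftEquiv y x) ↔
      ∃ n : ℕ, ∀ y : LPath G, y.Infinite → y.rng = x.vert n → ShiftEquiv y x →
        y = x.shift n := by
  simp only [forall_freqDiv_imp_shiftEquiv_iff_isClosed hx, forall_shiftEquiv_imp_eq_shift_iff hx]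
  refine ⟨fun ⟨n, hclosed⟩ => ?_, fun ⟨n, hn⟩ => ⟨n, hn ▸ isClosed_singleton⟩⟩
  obtain ⟨w, hw, k, hk⟩ := exists_inter_cylinder_subset_singleton hclosed
    ⟨x.shift n, shift_mem_shiftClass hx n, rfl⟩
  exact exists_inter_eq_singleton_of_isolated hx hw hk

/-- For a row-finite directed graph `E`, the following are equivalent:
(1) for every `x ∈ E^∞` there is `n ∈ ℕ` such that every path in `x(n)E^∞` that is
frequently divertable to `[x]` is shift equivalent to `x`;
(2) for every `x ∈ E^∞` there is `n ∈ ℕ` such that the only path in `x(n)E^∞` that is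
shift equivalent to `x` is `σ^n(x)`. -/
theorem stmt14 (G : DGraph) (hrf : G.RowFinite) :
    (∀ x : LPath G, x.Infinite → ∃ n : ℕ, ∀ y : LPath G, y.Infinite →
      y.rng = x.vert n → LPath.FreqDiv y x → LPath.ShiftEquiv y x) ↔
    (∀ x : LPath G, x.Infinite → ∃ n : ℕ, ∀ y : LPath G, y.Infinite →
      y.rng = x.vert n → LPath.ShiftEquiv y x → y = x.shift n) :=
  forall₂_congr fun _ hx => stmt14_general hx
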